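/- Let S be a complete c-semiring and Σ a finite alphabet. If A : List Σ → S is a DWA-regular series, then for all formal power series X, Y : List Σ → S, the left residual X\A and the right residual A/Y are DWA-regular series. -/

import Mathlib

/-!
Multiplication by `a` preserves suprema, so it has the right adjoint `resid a`. Consequently
residuals of series are computed pointwise (`lres_apply`, `rres_apply`):
`(X \ A)(v) = ⨅ u, X(u) ⇨ A(u ++ v)` and `(A / Y)(v) = ⨅ u, Y(u) ⇨ A(v ++ u)`.

Let `(Q, δ, q₀, F)` be a finite DWA recognizing `A`. The value of `A / Y` at `v` depends only on
the state reached from `q₀` by `v`, so the same automaton with new final weights recognizes it.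
The value of `X \ A` at `v` depends only on the map `Q → Q` by which `v` acts on states, so it
is recognized by an automaton with the finite state set `Q → Q`.
-/

/-- A complete c-semiring: a complete lattice with a commutative monoid
multiplication distributing over arbitrary suprema, whose unit is the top element.
Addition is join, zero is `⊥`, infinitary sums are suprema. -/
class CompleteCSemiring (S : Type*) extends CompleteLattice S, CommMonoid S where
  mul_sSup : ∀ (a : S) (s : Set S), a * sSup s = ⨆ b ∈ s, a * b
  one_eq_top : (1 : S) = ⊤

namespace FPS

open Classical
noncomputable section

variable {S : Type*} [CompleteCSemiring S] {α : Type*}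

/-- Cauchy product of formal power series. -/
def cauchy (A B : List α → S) : List α → S :=
  fun w => ⨆ (u : List α) (v : List α) (_ : u ++ v = w), A u * B v

/-- Left quotient of `A` by the series `X`. -/
def lquot (X A : List α → S) : List α → S := fun v => ⨆ u : List α, X u * A (u ++ v)

/-- Right quotient of `A` by the series `Y`. -/
def rquot (A Y : List α → S) : List α → S := fun v => ⨆ u : List α, A (v ++ u) * Y u

/-- Left residual `X \ A`. -/
def lres (X A : List α → S) : List α → S := sSup {Z | cauchy X Z ≤ A}

/-- Right residual `A / Y`. -/
def rres (A Y : List α → S) : List α → S := sSup {Z | cauchy Z Y ≤ A}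

/-- Residual in the semiring `S`: `a ⇨ b`. -/
def resid (a b : S) : S := sSup {x | a * x ≤ b}

/-- Inclusion degree of the series `f` into `g`. -/
def incl (f g : List α → S) : S := ⨅ u : List α, resid (f u) (g u)

/-- A word viewed as a series: `1` at `u` and `⊥` elsewhere. -/
def wordSeries (u : List α) : List α → S := fun w => if w = u then 1 else ⊥

/-- Reversal of a series. -/
def rev (A : List α → S) : List α → S := fun w => A w.reverse

/-- Extended transition map of a weighted automaton. -/
def deltaStar {Q : Type*} (δ : Q → α → Q → S) : Q → List α → Q → S
  | q, [], p => ⨆ _ : q = p, 1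
  | q, a :: w, p => ⨆ r : Q, δ q a r * deltaStar δ r w p

/-- Behaviour of a weighted automaton. -/
def behavior {Q : Type*} (δ : Q → α → Q → S) (I F : Q → S) : List α → S :=
  fun w => ⨆ (p : Q) (q : Q), I p * deltaStar δ p w q * F q

/-- Past of a state of a weighted automaton. -/
def past {Q : Type*} (δ : Q → α → Q → S) (I : Q → S) (q : Q) : List α → S :=
  fun w => ⨆ p : Q, I p * deltaStar δ p w q

/-- Future of a state of a weighted automaton. -/
def fut {Q : Type*} (δ : Q → α → Q → S) (F : Q → S) (q : Q) : List α → S :=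
  fun w => ⨆ p : Q, deltaStar δ q w p * F p

/-- A series is DWA-regular if it is recognized by a finite deterministic
weighted automaton. -/
def DWARegular (A : List α → S) : Prop :=
  ∃ (Q : Type) (_ : Fintype Q) (δ : Q → α → Q) (q0 : Q) (F : Q → S),
    ∀ w : List α, A w = F (w.foldl δ q0)

/-- A series is regular if it is the behaviour of a finite weighted automaton. -/
def Regular (A : List α → S) : Prop :=
  ∃ (Q : Type) (_ : Fintype Q) (δ : Q → α → Q → S) (I F : Q → S),
    behavior δ I F = A

/-- `(X, Y)` is a factorization of `A`. -/
def IsFactorization (A X Y : List α → S) : Prop :=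
  cauchy X Y ≤ A ∧
    ∀ X' Y' : List α → S, X ≤ X' → Y ≤ Y' → cauchy X' Y' ≤ A → X' = X ∧ Y' = Y

/-- The set of factorizations of `A` (states of the universal weighted automaton). -/
def Fact (A : List α → S) := {p : (List α → S) × (List α → S) // IsFactorization A p.1 p.2}

/-- Initial weights of the universal weighted automaton. -/
def JA (A : List α → S) (p : Fact A) : S := p.1.1 []

/-- Final weights of the universal weighted automaton. -/
def GA (A : List α → S) (p : Fact A) : S := p.1.2 []

/-- Transition weights of the universal weighted automaton. -/
def etaA (A : List α → S) (p : Fact A) (σ : α) (q : Fact A) : S :=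
  incl (cauchy (cauchy p.1.1 (wordSeries [σ])) q.1.2) A

/-- The relation `u ≡_A v`. -/
def eqA (A : List α → S) : Setoid (List α) where
  r u v := ∀ w, A (u ++ w) = A (v ++ w)
  iseqv := ⟨fun _ _ => rfl, fun h w => (h w).symm, fun h1 h2 w => (h1 w).trans (h2 w)⟩

end

end FPS

namespace FPS

section Residuals

variable {S : Type*} [CompleteCSemiring S] {α : Type*}

lemma mul_le_mul_left_of_le (a : S) {x y : S} (h : x ≤ y) : a * x ≤ a * y := by
  have h1 := CompleteCSemiring.mul_sSup a {x, y}
  rw [sSup_pair, sup_eq_right.2 h] at h1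
  rw [h1]
  exact le_iSup₂_of_le x (by simp) le_rfl

lemma le_resid_iff {a x b : S} : x ≤ resid a b ↔ a * x ≤ b := by
  refine ⟨fun h => (mul_le_mul_left_of_le a h).trans ?_, fun h => le_sSup h⟩
  rw [resid, CompleteCSemiring.mul_sSup]
  exact iSup₂_le fun _ hx => hx

lemma cauchy_le_iff {X Y A : List α → S} :
    cauchy X Y ≤ A ↔ ∀ u v, X u * Y v ≤ A (u ++ v) := by
  constructor
  · intro h u v
    refine le_trans ?_ (h (u ++ v))
    exact le_iSup_of_le u (le_iSup_of_le v (le_iSup_of_le rfl le_rfl))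
  · rintro h w
    refine iSup_le fun u => iSup_le fun v => iSup_le ?_
    rintro rfl
    exact h u v

lemma lres_apply (X A : List α → S) (v : List α) :
    lres X A v = ⨅ u, resid (X u) (A (u ++ v)) := by
  have h : IsGreatest {Z | cauchy X Z ≤ A} (fun v => ⨅ u, resid (X u) (A (u ++ v))) := by
    constructor
    · exact cauchy_le_iff.2 fun u v => le_resid_iff.1 (iInf_le _ u)
    · intro Z hZ v
      exact le_iInf fun u => le_resid_iff.2 (cauchy_le_iff.1 hZ u v)
  exact congrFun h.isLUB.sSup_eq v

lemma rres_apply (A Y : List α → S) (v : List α) :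
    rres A Y v = ⨅ u, resid (Y u) (A (v ++ u)) := by
  have h : IsGreatest {Z | cauchy Z Y ≤ A} (fun v => ⨅ u, resid (Y u) (A (v ++ u))) := by
    constructor
    · refine cauchy_le_iff.2 fun v u => ?_
      rw [mul_comm]
      exact le_resid_iff.1 (iInf_le _ u)
    · intro Z hZ v
      refine le_iInf fun u => le_resid_iff.2 ?_
      rw [mul_comm]
      exact cauchy_le_iff.1 hZ v u
  exact congrFun h.isLUB.sSup_eq v

/-- Running the automaton whose states are the self-maps of `Q` computes the action of a word
on all states of `Q` simultaneously. -/
lemma foldl_selfMap_apply {Q : Type*} (δ : Q → α → Q) (w : List α) (f : Q → Q) (q : Q) :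
    w.foldl (fun (g : Q → Q) a p => δ (g p) a) f q = w.foldl δ (f q) := by
  induction w generalizing f with
  | nil => rfl
  | cons a w ih => exact ih _

end Residuals

end FPS

open FPS in
/-- DWA-regular series are closed under left and right residuals. -/
theorem dwa_regular_closed_under_residuals {S : Type*} [CompleteCSemiring S]
    {α : Type} [Fintype α] (A : List α → S) (hA : DWARegular A) (X Y : List α → S) :
    DWARegular (lres X A) ∧ DWARegular (rres A Y) := by
  classical
  obtain ⟨Q, hQ, δ, q0, F, h⟩ := hA
  constructor
  · refine ⟨Q → Q, inferInstance, fun g a p => δ (g p) a, id,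
      fun g => ⨅ u : List α, resid (X u) (F (g (u.foldl δ q0))), fun w => ?_⟩
    simp only [lres_apply, h, List.foldl_append, foldl_selfMap_apply, id]
  · refine ⟨Q, hQ, δ, q0, fun q => ⨅ u : List α, resid (Y u) (F (u.foldl δ q)), fun w => ?_⟩
    simp only [rres_apply, h, List.foldl_append]
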